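/- Let ĉ be an s-recurrent configuration and let c := φ(ĉ). Then there exists a finite sequence of legal firing moves c = c₀ →(v₁) c₁ →(v₂) ⋯ →(v_k) c_k = c from c back to itself (where →(vᵢ) denotes a legal firing of vertex vᵢ) satisfying: (i) every vertex v ∈ V is fired exactly r(v) times; (ii) whenever vᵢ = s, one has c_{i−1}(v) < deg⁺(v) for all v ∈ V∖{s}; and (iii) there exists an index i ≤ k with vᵢ = s and c_{i−1}(s) = deg⁺(s). -/

import Mathlib

open Finset Polynomial

namespace SandpileBM

variable {V E : Type} [Fintype V] [DecidableEq V] [Fintype E] [DecidableEq E]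

/-- The number of edges from `v` to `w` in the multigraph given by `src`, `tgt`. -/
def numEdges (src tgt : E → V) (v w : V) : ℕ :=
  (Finset.univ.filter fun e => src e = v ∧ tgt e = w).card

/-- The out-degree of a vertex. -/
def outdeg (src : E → V) (v : V) : ℕ :=
  (Finset.univ.filter fun e => src e = v).card

/-- The in-degree of a vertex. -/
def indeg (tgt : E → V) (v : V) : ℕ :=
  (Finset.univ.filter fun e => tgt e = v).card

/-- The digraph is strongly connected: any vertex is reachable from any other by
a directed path. -/
def StronglyConnected (src tgt : E → V) : Prop :=
  ∀ v w : V, Relation.ReflTransGen (fun a b => ∃ e : E, src e = a ∧ tgt e = b) v w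

/-- Result of firing the vertex `v` on the chip configuration `c` (sinkless model). -/
def fire (src tgt : E → V) (c : V → ℕ) (v : V) : V → ℕ :=
  fun w => c w + numEdges src tgt v w - (if w = v then outdeg src v else 0)

/-- One legal firing move in the sinkless model. -/
def FireStep (src tgt : E → V) (c d : V → ℕ) : Prop :=
  ∃ v : V, outdeg src v ≤ c v ∧ d = fire src tgt c v

/-- `Reach c d`: `d` is obtained from `c` by a finite sequence of legal firing moves. -/
def Reach (src tgt : E → V) : (V → ℕ) → (V → ℕ) → Prop :=
  Relation.ReflTransGen (FireStep src tgt)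

/-- Stability of a chip configuration. -/
def Stable (src : E → V) (c : V → ℕ) : Prop :=
  ∀ v : V, c v < outdeg src v

/-- A chip configuration is recurrent if it is not stable and every configuration
accessible from it can reach it back. -/
def Recurrent (src tgt : E → V) (c : V → ℕ) : Prop :=
  ¬ Stable src c ∧ ∀ d : V → ℕ, Reach src tgt c d → Reach src tgt d c

/-- Level (total number of chips) of a chip configuration. -/
def lvl (c : V → ℕ) : ℕ := ∑ v : V, c v

/-- Indicator function of the vertex `s`. -/
def deltaS (s : V) : V → ℕ := fun v => if v = s then 1 else 0

/-- Result of firing the vertex `v` on an `s`-configuration. -/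
def sfire (src tgt : E → V) (s : V) (c : {v : V // v ≠ s} → ℕ) (v : {v : V // v ≠ s}) :
    {v : V // v ≠ s} → ℕ :=
  fun w => c w + numEdges src tgt v.1 w.1 - (if w = v then outdeg src v.1 else 0)

/-- One legal s-firing move. -/
def SFireStep (src tgt : E → V) (s : V) (c d : {v : V // v ≠ s} → ℕ) : Prop :=
  ∃ v : {v : V // v ≠ s}, outdeg src v.1 ≤ c v ∧ d = sfire src tgt s c v

/-- `SReach c d`: `d` is obtained from `c` by a finite sequence of legal s-firing moves. -/
def SReach (src tgt : E → V) (s : V) :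
    ({v : V // v ≠ s} → ℕ) → ({v : V // v ≠ s} → ℕ) → Prop :=
  Relation.ReflTransGen (SFireStep src tgt s)

/-- Stability of an `s`-configuration. -/
def SStable (src : E → V) (s : V) (c : {v : V // v ≠ s} → ℕ) : Prop :=
  ∀ v : {v : V // v ≠ s}, c v < outdeg src v.1

/-- The stabilization `c°` of an `s`-configuration: the (for strongly connected digraphs,
unique) stable `s`-configuration reachable from `c` by legal s-firing moves. -/
noncomputable def stab (src tgt : E → V) (s : V) (c : {v : V // v ≠ s} → ℕ) :
    {v : V // v ≠ s} → ℕ :=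
  Classical.epsilon fun d => SReach src tgt s c d ∧ SStable src s d

/-- An `s`-configuration `c` is s-recurrent if every `s`-configuration can be completed
to one whose stabilization is `c`. -/
def SRecurrent (src tgt : E → V) (s : V) (c : {v : V // v ≠ s} → ℕ) : Prop :=
  ∀ c₁ : {v : V // v ≠ s} → ℕ, ∃ c₂ : {v : V // v ≠ s} → ℕ,
    stab src tgt s (c₁ + c₂) = c

/-- `β_s`, recording the number of edges from `s` to each other vertex. -/
def betaS (src tgt : E → V) (s : V) : {v : V // v ≠ s} → ℕ :=
  fun v => numEdges src tgt s v.1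

/-- The relation `~_s` on s-recurrent configurations: `d = (c + k·β_s)°` for some `k`. -/
def SEquiv (src tgt : E → V) (s : V) (c d : {v : V // v ≠ s} → ℕ) : Prop :=
  ∃ k : ℕ, stab src tgt s (c + k • betaS src tgt s) = d

/-- Restriction of a chip configuration to `V ∖ {s}`. -/
def restrictS (s : V) (c : V → ℕ) : {v : V // v ≠ s} → ℕ := fun v => c v.1

/-- Extension `c̄` of an `s`-configuration by `0` at `s`. -/
def extendS (s : V) (c : {v : V // v ≠ s} → ℕ) : V → ℕ :=
  fun v => if h : v = s then 0 else c ⟨v, h⟩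

/-- The s-index `χ(c)`: the least `k` such that `c̄ + k·δ_s` is recurrent. -/
noncomputable def sIndex (src tgt : E → V) (s : V) (c : {v : V // v ≠ s} → ℕ) : ℕ :=
  sInf {k : ℕ | Recurrent src tgt (extendS s c + k • deltaS s)}

/-- `φ(c) := c̄ + χ(c)·δ_s`. -/
noncomputable def phi (src tgt : E → V) (s : V) (c : {v : V // v ≠ s} → ℕ) : V → ℕ :=
  extendS s c + sIndex src tgt s c • deltaS s

/-- The s-level `slvl(c) := χ(c) + Σ_{v ≠ s} c(v)`. -/
noncomputable def slvl (src tgt : E → V) (s : V) (c : {v : V // v ≠ s} → ℕ) : ℕ :=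
  sIndex src tgt s c + ∑ v : {v : V // v ≠ s}, c v

/-- The d-level `dlvl(c) := deg⁺(s) + Σ_{v ≠ s} c(v)`. -/
def dlvl (src : E → V) (s : V) (c : {v : V // v ≠ s} → ℕ) : ℕ :=
  outdeg src s + ∑ v : {v : V // v ≠ s}, c v

/-- The set (as a type) of recurrent chip configurations. -/
abbrev RecL (src tgt : E → V) := {c : V → ℕ // Recurrent src tgt c}

/-- The setoid on recurrent configurations generated by the relation `~` (i.e. `⤳`). -/
def recLSetoid (src tgt : E → V) : Setoid (RecL src tgt) :=
  Relation.EqvGen.setoid fun a b => Reach src tgt a.1 b.1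

/-- The set of `~`-classes of recurrent configurations. -/
abbrev RecLQuot (src tgt : E → V) := Quotient (recLSetoid src tgt)

/-- The set (as a type) of s-recurrent configurations. -/
abbrev RecS (src tgt : E → V) (s : V) := {c : {v : V // v ≠ s} → ℕ // SRecurrent src tgt s c}

/-- The setoid on s-recurrent configurations generated by the relation `~_s`. -/
def recSSetoid (src tgt : E → V) (s : V) : Setoid (RecS src tgt s) :=
  Relation.EqvGen.setoid fun a b => SEquiv src tgt s a.1 b.1

/-- The set of `~_s`-classes of s-recurrent configurations. -/
abbrev RecSQuot (src tgt : E → V) (s : V) := Quotient (recSSetoid src tgt s)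

/-- The level of a `~`-class of recurrent configurations (level is constant on classes). -/
noncomputable def lvlClass (src tgt : E → V) (q : RecLQuot src tgt) : ℕ :=
  sSup ((fun c : RecL src tgt => lvl c.1) '' {c | Quotient.mk (recLSetoid src tgt) c = q})

/-- The s-level of a `~_s`-class (s-level is constant on classes). -/
noncomputable def slvlClass (src tgt : E → V) (s : V) (q : RecSQuot src tgt s) : ℕ :=
  sSup ((fun c : RecS src tgt s => slvl src tgt s c.1) ''
    {c | Quotient.mk (recSSetoid src tgt s) c = q})

/-- The d-level of a `~_s`-class: the maximum d-level over the class. -/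
noncomputable def dlvlClass (src tgt : E → V) (s : V) (q : RecSQuot src tgt s) : ℕ :=
  sSup ((fun c : RecS src tgt s => dlvl src s c.1) ''
    {c | Quotient.mk (recSSetoid src tgt s) c = q})

/-- The Biggs–Merino polynomial `B(G,s;y) = Σ_{[c] ∈ Rec(G,s)/~_s} y^{dlvl([c])}`. -/
noncomputable def BM (src tgt : E → V) (s : V) : Polynomial ℤ :=
  ∑ᶠ q : RecSQuot src tgt s, X ^ dlvlClass src tgt s q

/-- `LegalSeq l c d`: firing the vertices in the list `l` in order is a sequence of
legal firing moves transforming `c` into `d` (sinkless model). -/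
def LegalSeq (src tgt : E → V) : List V → (V → ℕ) → (V → ℕ) → Prop
  | [], c, d => d = c
  | v :: l, c, d => outdeg src v ≤ c v ∧ LegalSeq src tgt l (fire src tgt c v) d

/-- `SLegalSeq l c d`: firing the vertices in the list `l` in order is a sequence of
legal s-firing moves transforming `c` into `d`. -/
def SLegalSeq (src tgt : E → V) (s : V) :
    List {v : V // v ≠ s} → ({v : V // v ≠ s} → ℕ) → ({v : V // v ≠ s} → ℕ) → Prop
  | [], c, d => d = c
  | v :: l, c, d => outdeg src v.1 ≤ c v ∧ SLegalSeq src tgt s l (sfire src tgt s c v) d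

/-- The configuration obtained from `c` after firing the vertices of `l` in order. -/
def iterFire (src tgt : E → V) (c : V → ℕ) (l : List V) : V → ℕ :=
  l.foldl (fire src tgt) c

/-- The Laplacian of the digraph applied to an integer vector:
`(Δq)(v) = deg⁺(v)·q(v) − Σ_w A(w,v)·q(w)`. -/
def lapApply (src tgt : E → V) (q : V → ℤ) : V → ℤ :=
  fun v => (outdeg src v : ℤ) * q v - ∑ w : V, (numEdges src tgt w v : ℤ) * q w

/-- `r` is the primitive period vector of the digraph: it has positive entries with
gcd `1`, lies in the kernel of the Laplacian, and generates this kernel. -/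
def IsPeriodVector (src tgt : E → V) (r : V → ℕ) : Prop :=
  (∀ v : V, 0 < r v) ∧ Finset.univ.gcd r = 1 ∧
    lapApply src tgt (fun v => (r v : ℤ)) = 0 ∧
    ∀ q : V → ℤ, lapApply src tgt q = 0 → ∃ k : ℤ, q = k • fun v => (r v : ℤ)

/-- The Laplacian matrix of the digraph. -/
def lapMatrix (src tgt : E → V) : Matrix V V ℤ :=
  Matrix.of fun v w =>
    if v = w then (outdeg src v : ℤ) - numEdges src tgt v v
    else -(numEdges src tgt w v : ℤ)

/-- The determinant of the reduced Laplacian obtained by deleting the row and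
column indexed by `v`. -/
def reducedLapDet (src tgt : E → V) (v : V) : ℤ :=
  (((lapMatrix src tgt).submatrix (fun a : {w : V // w ≠ v} => a.1)
    (fun a : {w : V // w ≠ v} => a.1)).det)

/-- The period constant `α := gcd_{v ∈ V} det Δ_v`. -/
def periodConstant (src tgt : E → V) : ℤ :=
  Finset.univ.gcd (reducedLapDet src tgt)

/-- `IsWalk l a b`: the list of edges `l` forms a directed walk from `a` to `b`. -/
def IsWalk (src tgt : E → V) : List E → V → V → Prop
  | [], a, b => a = b
  | e :: l, a, b => src e = a ∧ IsWalk src tgt l (tgt e) b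

/-- `IsPath l a b`: the list of edges `l` forms a directed path from `a` to `b`:
all visited vertices are distinct (except that the final vertex is allowed to
coincide with the starting vertex). -/
def IsPath (src tgt : E → V) (l : List E) (a b : V) : Prop :=
  IsWalk src tgt l a b ∧ (l.map tgt).Nodup ∧ a ∉ (l.map tgt).dropLast

/-- `T` is an arborescence rooted at `s`: for every vertex `v` there is a unique
directed path from `s` to `v` using only edges of `T`. -/
def IsArborescence (src tgt : E → V) (s : V) (T : Finset E) : Prop :=
  ∀ v : V, ∃! l : List E, (∀ e ∈ l, e ∈ T) ∧ IsPath src tgt l s v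

/-- The edge `e ∉ T` is externally active for the arborescence `T` (w.r.t. the linear
order on `E`): where `P₁`, `P₂` are the two edge-disjoint directed paths in `T ∪ {e}`
sharing their starting vertex and ending at `tgt e`, with `e ∈ P₁`, the smallest edge
on `P₁ ++ P₂` lies on `P₁`. -/
def ExtActive [LinearOrder E] (src tgt : E → V) (T : Finset E) (e : E) : Prop :=
  e ∉ T ∧ ∃ (u : V) (p₁ p₂ : List E),
    (∀ f ∈ p₁, f ∈ T ∨ f = e) ∧ (∀ f ∈ p₂, f ∈ T ∨ f = e) ∧
    IsPath src tgt p₁ u (tgt e) ∧ IsPath src tgt p₂ u (tgt e) ∧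
    e ∈ p₁ ∧ (∀ f ∈ p₁, f ∉ p₂) ∧
    ∃ fmin ∈ p₁, ∀ f ∈ p₁ ++ p₂, fmin ≤ f

/-- The external activity `e(T)` of an arborescence `T`. -/
noncomputable def extActivity [LinearOrder E] (src tgt : E → V) (T : Finset E) : ℕ :=
  Nat.card {e : E // ExtActive src tgt T e}

/-- The greedoid Tutte polynomial `T(G,s;y) = Σ_{T ∈ A(G,s)} y^{e(T)}`. -/
noncomputable def greedoidTutte [LinearOrder E] (src tgt : E → V) (s : V) : Polynomial ℤ :=
  ∑ᶠ T : {T : Finset E // IsArborescence src tgt s T}, X ^ extActivity src tgt T.1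

/-- `f` is a `G^r`-parking function rooted at `s`. -/
def IsParking (src tgt : E → V) (s : V) (f : {v : V // v ≠ s} → ℕ) : Prop :=
  ∀ A : Finset {v : V // v ≠ s}, A.Nonempty →
    ∃ v ∈ A, f v < Nat.card {e : E // (∀ w ∈ A, src e ≠ w.1) ∧ tgt e = v.1}

/-- The d-level of a `G^r`-parking function: `|E| − |V| + 1 − Σ_{v≠s} f(v)`. -/
noncomputable def parkDlvl (src : E → V) (s : V) (f : {v : V // v ≠ s} → ℕ) : ℕ :=
  ((Fintype.card E : ℤ) - Fintype.card V + 1 - ∑ v : {v : V // v ≠ s}, (f v : ℤ)).toNat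

/-- `σ` is an s-decreasing traversal: a sequence in which every vertex and edge of `G`
appears exactly once, satisfying (R1) every vertex other than `s` is immediately
preceded by an edge targeting it, and (R2) every edge is the `<ₑ`-maximum edge not yet
seen whose source has been seen. -/
def IsTraversal [LinearOrder E] (src tgt : E → V) (s : V) (σ : List (V ⊕ E)) : Prop :=
  σ.Nodup ∧ (∀ x : V ⊕ E, x ∈ σ) ∧
  (∀ (i : ℕ) (hi : i < σ.length) (v : V),
      σ.get ⟨i, hi⟩ = Sum.inl v → v ≠ s →
      0 < i ∧ ∃ e : E, tgt e = v ∧ σ.get ⟨i - 1, by omega⟩ = Sum.inr e) ∧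
  (∀ (i : ℕ) (hi : i < σ.length) (e : E),
      σ.get ⟨i, hi⟩ = Sum.inr e →
      Sum.inl (src e) ∈ σ.take i ∧
      ∀ f : E, Sum.inr f ∉ σ.take i → Sum.inl (src f) ∈ σ.take i → f ≤ e)

open scoped Classical in
/-- `Υ(σ)`: the set of edges immediately preceding a non-sink vertex in `σ`. -/
noncomputable def Upsilon (src tgt : E → V) (s : V) (σ : List (V ⊕ E)) : Finset E :=
  Finset.univ.filter fun e =>
    ∃ (i : ℕ) (hi : i < σ.length) (v : V), v ≠ s ∧ σ.get ⟨i, hi⟩ = Sum.inl v ∧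
      0 < i ∧ ∃ hj : i - 1 < σ.length, σ.get ⟨i - 1, hj⟩ = Sum.inr e

/-- The strength of `σ`: the number of strong edges, i.e. edges whose target appears
before them in `σ`. -/
noncomputable def strength (tgt : E → V) (σ : List (V ⊕ E)) : ℕ :=
  Nat.card {e : E // ∃ (i : ℕ) (hi : i < σ.length),
    σ.get ⟨i, hi⟩ = Sum.inr e ∧ Sum.inl (tgt e) ∈ σ.take i}

/-- `Ψ(σ)(v)`: one less than the number of edges targeting `v` that appear before the
vertex `v` in `σ`. -/
def Psi (tgt : E → V) (s : V) (σ : List (V ⊕ E)) : {v : V // v ≠ s} → ℕ :=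
  fun v =>
    (((σ.takeWhile fun x => x ≠ Sum.inl v.1).filterMap Sum.getRight?).filter
      fun e => tgt e = v.1).length - 1

/-- Configuration (over the integers) obtained from `c` after firing each `w` `x w` times. -/
def cfg (src tgt : E → V) (c : V → ℕ) (x : V → ℤ) (v : V) : ℤ :=
  (c v : ℤ) - lapApply src tgt x v

/-- Count vector of a list. -/
def cnt (l : List V) : V → ℤ := fun w => (l.count w : ℤ)

/-- Legality of a firing list, phrased with prefixes. -/
def LegalP (src tgt : E → V) (c : V → ℕ) (l : List V) : Prop :=
  ∀ p v q, l = p ++ v :: q → (outdeg src v : ℤ) ≤ cfg src tgt c (cnt p) v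

theorem lap_add (src tgt : E → V) (x y : V → ℤ) :
    lapApply src tgt (x + y) = lapApply src tgt x + lapApply src tgt y := by
  funext v
  simp only [lapApply, Pi.add_apply, mul_add, Finset.sum_add_distrib]
  ring

theorem lap_smul (src tgt : E → V) (k : ℤ) (x : V → ℤ) :
    lapApply src tgt (k • x) = k • lapApply src tgt x := by
  funext v
  simp only [lapApply, Pi.smul_apply, smul_eq_mul, mul_sub, Finset.mul_sum]
  congr 1
  · ring
  · exact Finset.sum_congr rfl fun w _ => by ring

theorem lap_zero (src tgt : E → V) : lapApply src tgt 0 = 0 := by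
  funext v
  simp [lapApply]

theorem lap_sub (src tgt : E → V) (x y : V → ℤ) :
    lapApply src tgt (x - y) = lapApply src tgt x - lapApply src tgt y := by
  funext v
  simp only [lapApply, Pi.sub_apply, mul_sub, Finset.sum_sub_distrib]
  ring

/-- Firing more of the other vertices only increases the chips at `v`. -/
theorem lap_mono (src tgt : E → V) (x y : V → ℤ) (h : x ≤ y) (v : V) :
    lapApply src tgt y v ≤ lapApply src tgt x v + (outdeg src v : ℤ) * (y v - x v) := by
  simp only [lapApply]
  have : ∑ w : V, (numEdges src tgt w v : ℤ) * x w ≤ ∑ w : V, (numEdges src tgt w v : ℤ) * y w :=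
    Finset.sum_le_sum fun w _ => mul_le_mul_of_nonneg_left (h w) (by positivity)
  linarith [mul_sub (outdeg src v : ℤ) (y v) (x v)]

theorem cfg_mono (src tgt : E → V) (c : V → ℕ) (x y : V → ℤ) (h : x ≤ y) (v : V)
    (hv : x v = y v) : cfg src tgt c x v ≤ cfg src tgt c y v := by
  have := lap_mono src tgt x y h v
  rw [hv] at this
  simp only [cfg]
  linarith [mul_sub (outdeg src v : ℤ) (y v) (y v), sub_self ((outdeg src v : ℤ) * (y v))]

theorem cnt_nil : cnt ([] : List V) = 0 := by
  funext w; simp [cnt]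

theorem cnt_nonneg (l : List V) : 0 ≤ cnt l := fun w => by simp [cnt]

theorem cnt_append (p q : List V) : cnt (p ++ q) = cnt p + cnt q := by
  funext w; simp [cnt]

theorem cnt_cons (v : V) (q : List V) : cnt (v :: q) = cnt [v] + cnt q :=
  cnt_append [v] q

theorem cnt_single (v w : V) : cnt [v] w = if w = v then 1 else 0 := by
  by_cases h : w = v
  · subst h; simp [cnt]
  · have h' : ¬ v = w := fun e => h e.symm
    simp [cnt, h, h', List.count_singleton]

theorem fire_eq (src tgt : E → V) (c : V → ℕ) (v : V) (h : outdeg src v ≤ c v) (w : V) :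
    (fire src tgt c v w : ℤ) = cfg src tgt c (cnt [v]) w := by
  simp only [fire, cfg, lapApply, cnt_single]
  by_cases hw : w = v
  · subst hw
    simp
    rw [Nat.cast_sub (by omega)]
    push_cast
    ring
  · simp [hw]

theorem cfg_fire (src tgt : E → V) (c : V → ℕ) (v : V) (h : outdeg src v ≤ c v) (x : V → ℤ) :
    cfg src tgt (fire src tgt c v) x = cfg src tgt c (cnt [v] + x) := by
  funext w
  have := fire_eq src tgt c v h w
  simp only [cfg, lap_add, Pi.add_apply] at *
  rw [this]; ring

theorem cfg_add (src tgt : E → V) (c d : V → ℕ) (y : V → ℤ)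
    (h : ∀ v, (d v : ℤ) = cfg src tgt c y v) (x : V → ℤ) :
    cfg src tgt d x = cfg src tgt c (y + x) := by
  funext w
  have := h w
  simp only [cfg, lap_add, Pi.add_apply] at *
  rw [this]; ring

theorem legalSeq_end (src tgt : E → V) (l : List V) : ∀ c d : V → ℕ,
    LegalSeq src tgt l c d → ∀ v, (d v : ℤ) = cfg src tgt c (cnt l) v := by
  induction l with
  | nil =>
    intro c d h v
    simp only [LegalSeq] at h
    subst h
    simp [cfg, cnt_nil, lap_zero]
  | cons u l ih =>
    intro c d h v
    obtain ⟨h1, h2⟩ := h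
    rw [ih _ _ h2 v, cfg_fire src tgt c u h1, cnt_cons u l]

theorem legalSeq_iterFire (src tgt : E → V) (l : List V) : ∀ c d : V → ℕ,
    LegalSeq src tgt l c d → d = iterFire src tgt c l := by
  induction l with
  | nil => intro c d h; simpa [iterFire, LegalSeq] using h
  | cons u l ih =>
    intro c d h
    exact ih _ _ h.2

theorem legalSeq_append (src tgt : E → V) (l m : List V) : ∀ c d e : V → ℕ,
    LegalSeq src tgt l c d → LegalSeq src tgt m d e → LegalSeq src tgt (l ++ m) c e := by
  induction l with
  | nil => intro c d e h h'; simp only [LegalSeq] at h; subst h; exact h'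
  | cons u l ih =>
    intro c d e h h'
    exact ⟨h.1, ih _ _ _ h.2 h'⟩

theorem legalP_of_legalSeq (src tgt : E → V) (l : List V) : ∀ c d : V → ℕ,
    LegalSeq src tgt l c d → LegalP src tgt c l := by
  induction l with
  | nil => intro c d h p v q hp; simp at hp
  | cons u l ih =>
    intro c d h p v q hp
    cases p with
    | nil =>
      simp only [List.nil_append, List.cons.injEq] at hp
      obtain ⟨rfl, rfl⟩ := hp
      have := h.1
      simp only [cnt_nil, cfg, lap_zero, Pi.zero_apply, sub_zero]
      exact_mod_cast this
    | cons a p =>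
      simp only [List.cons_append, List.cons.injEq] at hp
      obtain ⟨rfl, hp⟩ := hp
      have := ih _ _ h.2 p v q hp
      rwa [cfg_fire src tgt c u h.1, ← cnt_cons u p] at this

theorem legalSeq_of_legalP (src tgt : E → V) (l : List V) : ∀ c : V → ℕ,
    LegalP src tgt c l → LegalSeq src tgt l c (iterFire src tgt c l) := by
  induction l with
  | nil => intro c h; simp [LegalSeq, iterFire]
  | cons u l ih =>
    intro c h
    have h1 : outdeg src u ≤ c u := by
      have := h [] u l rfl
      simp only [cnt_nil, cfg, lap_zero, Pi.zero_apply, sub_zero] at this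
      exact_mod_cast this
    refine ⟨h1, ih _ ?_⟩
    intro p v q hp
    have := h (u :: p) v q (by simp [hp])
    rwa [cfg_fire src tgt c u h1, ← cnt_cons u p]

theorem legalP_prefix (src tgt : E → V) (c : V → ℕ) (p q : List V)
    (h : LegalP src tgt c (p ++ q)) : LegalP src tgt c p := by
  intro a v b hab
  exact h a v (b ++ q) (by simp [hab])

theorem iterFire_eq (src tgt : E → V) (c : V → ℕ) (l : List V) (h : LegalP src tgt c l) (v : V) :
    (iterFire src tgt c l v : ℤ) = cfg src tgt c (cnt l) v :=
  legalSeq_end src tgt l c _ (legalSeq_of_legalP src tgt l c h) v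

/-- Exchange lemma. -/
theorem exchange (src tgt : E → V) (c : V → ℕ) (z : V → ℤ) (hz : 0 ≤ z) (l : List V) :
    LegalP src tgt c l → (∃ u, z u < cnt l u) →
    ∃ v, z v < cnt l v ∧ (outdeg src v : ℤ) ≤ cfg src tgt c z v := by
  induction l using List.reverseRecOn with
  | nil =>
    rintro - ⟨u, hu⟩
    have := hz u
    simp [cnt_nil] at hu this
    omega
  | append_singleton p v ih =>
    rintro hl ⟨u, hu⟩
    have hle : ∀ w, cnt p w ≤ cnt (p ++ [v]) w := by
      intro w
      rw [cnt_append]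
      have := cnt_nonneg [v] w
      simp at this ⊢
      exact this
    by_cases h : ∃ u, z u < cnt p u
    · obtain ⟨w, hw, hw'⟩ := ih (legalP_prefix src tgt c p [v] hl) h
      exact ⟨w, lt_of_lt_of_le hw (hle w), hw'⟩
    · push Not at h
      have huv : u = v := by
        by_contra hne
        have h1 := h u
        rw [cnt_append, Pi.add_apply, cnt_single, if_neg hne] at hu
        omega
      subst huv
      refine ⟨u, hu, le_trans (hl p u [] rfl) (cfg_mono src tgt c _ _ h u ?_)⟩
      have h1 := h u
      rw [cnt_append, Pi.add_apply, cnt_single, if_pos rfl] at hu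
      omega

/-- Building lemma: greedily build a list with prescribed counts. -/
theorem build (z : V → ℤ) (Q : (V → ℤ) → V → Prop)
    (hQ : ∀ x : V → ℤ, 0 ≤ x → x ≤ z → x ≠ z → ∃ v, x v < z v ∧ Q x v) (hz : 0 ≤ z) :
    ∃ l : List V, cnt l = z ∧ ∀ p v q, l = p ++ v :: q → Q (cnt p) v := by
  have key : ∀ n : ℕ, ∀ l : List V, cnt l ≤ z → (∑ v, (z v - cnt l v)).toNat = n →
      (∀ p v q, l = p ++ v :: q → Q (cnt p) v) →
      ∃ l : List V, cnt l = z ∧ ∀ p v q, l = p ++ v :: q → Q (cnt p) v := by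
    intro n
    induction n with
    | zero =>
      intro l hl hn h
      refine ⟨l, ?_, h⟩
      have h0 : ∑ v, (z v - cnt l v) = 0 := by
        have : 0 ≤ ∑ v, (z v - cnt l v) := Finset.sum_nonneg fun v _ => sub_nonneg.2 (hl v)
        omega
      rw [Finset.sum_eq_zero_iff_of_nonneg (fun v _ => sub_nonneg.2 (hl v))] at h0
      funext v
      have := h0 v (Finset.mem_univ v)
      omega
    | succ n ih =>
      intro l hl hn h
      have hne : cnt l ≠ z := by
        intro e
        simp [e] at hn
      obtain ⟨v, hv, hq⟩ := hQ _ (cnt_nonneg l) hl hne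
      apply ih (l ++ [v])
      · intro w
        rw [cnt_append]
        show cnt l w + cnt [v] w ≤ z w
        rw [cnt_single]
        have : cnt l w ≤ z w := hl w
        split_ifs with hw
        · subst hw; omega
        · omega
      · have : ∑ w, (z w - cnt (l ++ [v]) w) = ∑ w, (z w - cnt l w) - 1 := by
          have h1 : ∑ w, cnt [v] w = 1 := by
            simp [cnt_single]
          rw [cnt_append]
          simp only [Pi.add_apply, Finset.sum_sub_distrib, Finset.sum_add_distrib, h1]
          ring
        rw [this]; omega
      · intro p u q hp
        rcases List.eq_nil_or_concat q with rfl | ⟨q', a, rfl⟩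
        · obtain ⟨h1, h2⟩ := List.append_inj' hp rfl
          simp at h2
          subst h1; subst h2
          exact hq
        · have hp' : l ++ [v] = (p ++ u :: q') ++ [a] := by simp [hp]
          obtain ⟨h1, h2⟩ := List.append_inj' hp' rfl
          exact h p u q' h1
  exact key _ [] (by simpa [cnt_nil] using hz) rfl (by intro p v q hp; simp at hp)

theorem reach_of_legalSeq (src tgt : E → V) (l : List V) : ∀ c d : V → ℕ,
    LegalSeq src tgt l c d → Reach src tgt c d := by
  induction l with
  | nil => intro c d h; simp only [LegalSeq] at h; subst h; exact Relation.ReflTransGen.refl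
  | cons u l ih =>
    intro c d h
    exact Relation.ReflTransGen.head ⟨u, h.1, rfl⟩ (ih _ _ h.2)

theorem legalSeq_of_reach (src tgt : E → V) (c d : V → ℕ) (h : Reach src tgt c d) :
    ∃ l, LegalSeq src tgt l c d := by
  induction h with
  | refl => exact ⟨[], rfl⟩
  | tail _ hbc ih =>
    obtain ⟨l, hl⟩ := ih
    obtain ⟨v, hv, rfl⟩ := hbc
    exact ⟨l ++ [v], legalSeq_append src tgt l [v] _ _ _ hl ⟨hv, rfl⟩⟩

/-- A recurrent configuration has a legal closed list, with count vector `k • r`, `k ≥ 1`. -/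
theorem closed_of_recurrent (src tgt : E → V) (r : V → ℕ)
    (hr : IsPeriodVector src tgt r) (c : V → ℕ) (hc : Recurrent src tgt c) :
    ∃ (l : List V) (k : ℤ), LegalP src tgt c l ∧ 1 ≤ k ∧
      cnt l = k • (fun v => (r v : ℤ)) := by
  obtain ⟨hns, hrec⟩ := hc
  simp only [Stable, not_forall, not_lt] at hns
  obtain ⟨v, hv⟩ := hns
  obtain ⟨l, hl⟩ := legalSeq_of_reach src tgt _ _
    (hrec (fire src tgt c v) (Relation.ReflTransGen.single ⟨v, hv, rfl⟩))
  have hL : LegalSeq src tgt (v :: l) c c := ⟨hv, hl⟩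
  have hend := legalSeq_end src tgt _ _ _ hL
  have h0 : lapApply src tgt (cnt (v :: l)) = 0 := by
    funext w
    have := hend w
    simp only [cfg] at this
    simp only [Pi.zero_apply]
    omega
  obtain ⟨k, hk⟩ := hr.2.2.2 _ h0
  refine ⟨v :: l, k, legalP_of_legalSeq src tgt _ _ _ hL, ?_, hk⟩
  have h1 : 0 < cnt (v :: l) v := by simp [cnt]
  rw [hk] at h1
  simp only [Pi.smul_apply, smul_eq_mul] at h1
  have : (0 : ℤ) < r v := by exact_mod_cast hr.1 v
  exact pos_of_mul_pos_left h1 this.le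

theorem recurrent_of_closed (src tgt : E → V) [Nonempty V] (r : V → ℕ)
    (hr : IsPeriodVector src tgt r) (c : V → ℕ) (l : List V) (hl : LegalP src tgt c l)
    (hcnt : cnt l = fun v => (r v : ℤ)) : Recurrent src tgt c := by
  have hlap : lapApply src tgt (fun v => (r v : ℤ)) = 0 := hr.2.2.1
  have hclosed : LegalSeq src tgt l c c := by
    have h := legalSeq_of_legalP src tgt l c hl
    have : iterFire src tgt c l = c := by
      funext v
      have := iterFire_eq src tgt c l hl v
      rw [hcnt] at this
      simp only [cfg, hlap, Pi.zero_apply, sub_zero] at this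
      exact_mod_cast this
    rwa [this] at h
  have hpow : ∀ k : ℕ, ∃ L, LegalSeq src tgt L c c ∧ cnt L = (k : ℤ) • fun v => (r v : ℤ) := by
    intro k
    induction k with
    | zero => exact ⟨[], rfl, by simp [cnt_nil]⟩
    | succ k ih =>
      obtain ⟨L, h1, h2⟩ := ih
      refine ⟨l ++ L, legalSeq_append src tgt l L _ _ _ hclosed h1, ?_⟩
      rw [cnt_append, h2, hcnt]
      push_cast
      rw [add_smul, one_smul, add_comm]
  constructor
  · intro hst
    cases l with
    | nil =>
      obtain ⟨v⟩ := ‹Nonempty V›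
      have := congrFun hcnt v
      have h2 := hr.1 v
      simp [cnt] at this
      omega
    | cons u l => exact absurd hclosed.1 (not_le.2 (hst u))
  · intro d hd
    obtain ⟨m, hm⟩ := legalSeq_of_reach src tgt c d hd
    have hmend := legalSeq_end src tgt _ _ _ hm
    obtain ⟨L, hL, hLc⟩ := hpow m.length
    have hle : cnt m ≤ cnt L := by
      intro v
      rw [hLc]
      simp only [cnt, Pi.smul_apply, smul_eq_mul]
      have h1 : m.count v ≤ m.length := List.count_le_length
      have h2 := hr.1 v
      have : m.count v ≤ m.length * r v := by nlinarith
      exact_mod_cast this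
    have hLP := legalP_of_legalSeq src tgt _ _ _ hL
    obtain ⟨q, hq1, hq2⟩ := build (cnt L - cnt m)
      (fun x v => (outdeg src v : ℤ) ≤ cfg src tgt d x v) (by
        intro x hx0 hx hne
        have : ∃ u, (cnt m + x) u < cnt L u := by
          by_contra hcon
          push Not at hcon
          apply hne
          funext u
          have h1 := hcon u
          have h2 := hx u
          simp only [Pi.add_apply, Pi.sub_apply] at *
          omega
        obtain ⟨v, hv1, hv2⟩ := exchange src tgt c (cnt m + x)
          (add_nonneg (cnt_nonneg m) hx0) L hLP this
        refine ⟨v, ?_, ?_⟩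
        · simp only [Pi.add_apply, Pi.sub_apply] at *
          omega
        · rw [cfg_add src tgt c d _ hmend]
          exact hv2) (sub_nonneg.2 hle)
    have hqL : LegalP src tgt d q := hq2
    have hseq := legalSeq_of_legalP src tgt q d hqL
    have hend : iterFire src tgt d q = c := by
      funext v
      have h1 := iterFire_eq src tgt d q hqL v
      rw [cfg_add src tgt c d _ hmend, hq1, add_sub_cancel,
        ← legalSeq_end src tgt _ _ _ hL] at h1
      exact_mod_cast h1
    rw [hend] at hseq
    exact reach_of_legalSeq src tgt q d c hseq

/-- Key step of the greedy procedure for a recurrent configuration. -/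
theorem recurrent_step (src tgt : E → V) (r : V → ℕ)
    (hr : IsPeriodVector src tgt r) (c : V → ℕ) (hc : Recurrent src tgt c)
    (x : V → ℤ) (hx0 : 0 ≤ x) (hx : x ≤ fun v => (r v : ℤ)) (hne : x ≠ fun v => (r v : ℤ)) :
    ∃ v, x v < r v ∧ (outdeg src v : ℤ) ≤ cfg src tgt c x v := by
  obtain ⟨l, k, hl, hk, hlc⟩ := closed_of_recurrent src tgt r hr c hc
  have hlap : lapApply src tgt (fun v => (r v : ℤ)) = 0 := hr.2.2.1
  have hz : 0 ≤ x + (k - 1) • (fun v => (r v : ℤ)) := by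
    intro v
    have h1 := hx0 v
    have h2 : (0 : ℤ) ≤ (k - 1) * r v := mul_nonneg (by omega) (by positivity)
    simp only [Pi.add_apply, Pi.smul_apply, smul_eq_mul, Pi.zero_apply] at *
    omega
  have hex : ∃ u, x u < r u := by
    by_contra hcon
    push Not at hcon
    exact hne (le_antisymm hx hcon)
  have e : ∀ u, (x + (k - 1) • (fun v => (r v : ℤ))) u < cnt l u ↔ x u < r u := by
    intro u
    rw [hlc]
    simp only [Pi.add_apply, Pi.smul_apply, smul_eq_mul, sub_mul, one_mul]
    constructor <;> intro h <;> linarith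
  obtain ⟨u, hu⟩ := hex
  obtain ⟨v, hv1, hv2⟩ := exchange src tgt c _ hz l hl ⟨u, (e u).2 hu⟩
  refine ⟨v, (e v).1 hv1, ?_⟩
  simp only [cfg, lap_add, lap_smul, hlap, smul_zero, add_zero] at hv2
  exact hv2

theorem restrict_fire (src tgt : E → V) (s : V) (c : V → ℕ) (v : V) (hv : v ≠ s) :
    restrictS s (fire src tgt c v) = sfire src tgt s (restrictS s c) ⟨v, hv⟩ := by
  funext w
  simp only [restrictS, fire, sfire, Subtype.ext_iff]

theorem restrict_extend (s : V) (c : {v : V // v ≠ s} → ℕ) (k : ℕ) :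
    restrictS s (extendS s c + k • deltaS s) = c := by
  funext w
  simp [restrictS, extendS, deltaS, w.2]

theorem sreach_of_legalSeq (src tgt : E → V) (s : V) (l : List V) : ∀ c d : V → ℕ,
    s ∉ l → LegalSeq src tgt l c d → SReach src tgt s (restrictS s c) (restrictS s d) := by
  induction l with
  | nil => intro c d _ h; simp only [LegalSeq] at h; subst h; exact Relation.ReflTransGen.refl
  | cons u l ih =>
    intro c d hs h
    simp only [List.mem_cons, not_or] at hs
    have hu : u ≠ s := fun e => hs.1 e.symm
    exact Relation.ReflTransGen.head ⟨⟨u, hu⟩, h.1, rfl⟩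
      (restrict_fire src tgt s c u hu ▸ ih _ _ hs.2 h.2)

theorem legalSeq_of_sreach (src tgt : E → V) (s : V) (c d : {v : V // v ≠ s} → ℕ)
    (h : SReach src tgt s c d) (c' : V → ℕ) (hc' : restrictS s c' = c) :
    ∃ l d', s ∉ l ∧ LegalSeq src tgt l c' d' ∧ restrictS s d' = d := by
  induction h with
  | refl => exact ⟨[], c', by simp, rfl, hc'⟩
  | tail _ hbc ih =>
    obtain ⟨l, d', hs, hl, hd'⟩ := ih
    obtain ⟨v, hv, rfl⟩ := hbc
    refine ⟨l ++ [v.1], fire src tgt d' v.1, ?_,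
      legalSeq_append src tgt l [v.1] _ _ _ hl ⟨?_, rfl⟩, ?_⟩
    · simp only [List.mem_append, List.mem_singleton, not_or]
      exact ⟨hs, fun e => v.2 e.symm⟩
    · rw [← hd'] at hv; exact hv
    · rw [restrict_fire src tgt s d' v.1 v.2, hd']

theorem sum_numEdges (src tgt : E → V) (v : V) :
    ∑ w, numEdges src tgt v w = outdeg src v := by
  simp only [numEdges, outdeg]
  rw [Finset.card_eq_sum_card_fiberwise (f := tgt) (t := Finset.univ) (by simp)]
  simp only [Finset.filter_filter]

theorem sum_lap (src tgt : E → V) (x : V → ℤ) : ∑ v, lapApply src tgt x v = 0 := by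
  simp only [lapApply, Finset.sum_sub_distrib]
  rw [Finset.sum_comm]
  simp only [← Finset.sum_mul]
  rw [sub_eq_zero]
  refine Finset.sum_congr rfl fun v _ => ?_
  rw [← sum_numEdges src tgt v]
  push_cast
  rfl

theorem sum_cfg (src tgt : E → V) (c : V → ℕ) (x : V → ℤ) :
    ∑ v, cfg src tgt c x v = ∑ v, (c v : ℤ) := by
  simp only [cfg, Finset.sum_sub_distrib, sum_lap, sub_zero]

theorem count_bound (src tgt : E → V) (s : V) (c : V → ℕ) (v : V)
    (h : Relation.ReflTransGen (fun a b => ∃ e : E, src e = a ∧ tgt e = b) v s) :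
    ∃ B : ℤ, ∀ l, s ∉ l → LegalP src tgt c l → cnt l v ≤ B := by
  induction h using Relation.ReflTransGen.head_induction_on with
  | refl =>
    refine ⟨0, fun l hs _ => ?_⟩
    simp [cnt, List.count_eq_zero_of_not_mem hs]
  | head hab _ ih =>
    rename_i a b _
    obtain ⟨B, hB⟩ := ih
    obtain ⟨e, he1, he2⟩ := hab
    refine ⟨∑ v, (c v : ℤ) + outdeg src b * B, fun l hs hl => ?_⟩
    have hBl := hB l hs hl
    have hA : (1 : ℤ) ≤ numEdges src tgt a b := by
      have : 0 < numEdges src tgt a b :=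
        Finset.card_pos.2 ⟨e, by simp [he1, he2]⟩
      exact_mod_cast this
    have hend : ∀ w, 0 ≤ cfg src tgt c (cnt l) w := fun w => by
      rw [← iterFire_eq src tgt c l hl w]; positivity
    have h1 : cfg src tgt c (cnt l) b ≤ ∑ v, (c v : ℤ) := by
      rw [← sum_cfg src tgt c (cnt l)]
      exact Finset.single_le_sum (fun w _ => hend w) (Finset.mem_univ b)
    have h2 : (numEdges src tgt a b : ℤ) * cnt l a ≤
        ∑ w : V, (numEdges src tgt w b : ℤ) * cnt l w :=
      Finset.single_le_sum (f := fun w => (numEdges src tgt w b : ℤ) * cnt l w)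
        (fun w _ => mul_nonneg (by positivity) (cnt_nonneg l w)) (Finset.mem_univ a)
    have h3 : cnt l a ≤ (numEdges src tgt a b : ℤ) * cnt l a :=
      le_mul_of_one_le_left (cnt_nonneg l a) hA
    have h4 : (outdeg src b : ℤ) * cnt l b ≤ outdeg src b * B :=
      mul_le_mul_of_nonneg_left hBl (by positivity)
    have h5 : (0 : ℤ) ≤ c b := by positivity
    simp only [cfg, lapApply] at h1
    linarith

theorem exists_stab (src tgt : E → V) (hG : StronglyConnected src tgt) (s : V)
    (ch : {v : V // v ≠ s} → ℕ) : ∃ d, SReach src tgt s ch d ∧ SStable src s d := by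
  have hc := restrict_extend s ch 0
  set c := extendS s ch + 0 • deltaS s with hcdef
  choose B hB using fun v => count_bound src tgt s c v (hG v s)
  have hbd : ∀ l, s ∉ l → LegalP src tgt c l → l.length ≤ (∑ v, B v).toNat := by
    intro l hs hl
    have h1 : ∑ v, cnt l v ≤ ∑ v, B v := Finset.sum_le_sum fun v _ => hB v l hs hl
    have h2 : ∑ v, cnt l v = l.length := by
      simp only [cnt]
      have : ∑ v, l.count v = l.length := by
        have := Multiset.toFinset_sum_count_eq (l : Multiset V)
        rw [← Finset.sum_subset (Finset.subset_univ (l : Multiset V).toFinset)]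
        · simpa using this
        · intro x _ hx
          have hx' : x ∉ l := by simpa using hx
          simp [List.count_eq_zero_of_not_mem hx']
      exact_mod_cast this
    omega
  by_contra hcon
  push Not at hcon
  have hall : ∀ n : ℕ, ∃ l, s ∉ l ∧ LegalP src tgt c l ∧ l.length = n := by
    intro n
    induction n with
    | zero => exact ⟨[], by simp, by intro p v q h; simp at h, rfl⟩
    | succ n ih =>
      obtain ⟨l, hs, hl, hn⟩ := ih
      have hseq := legalSeq_of_legalP src tgt l c hl
      have hr := sreach_of_legalSeq src tgt s l _ _ hs hseq
      rw [hc] at hr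
      have := hcon _ hr
      simp only [SStable, not_forall, not_lt] at this
      obtain ⟨v, hv⟩ := this
      refine ⟨l ++ [v.1], ?_, ?_, by simp [hn]⟩
      · simp only [List.mem_append, List.mem_singleton, not_or]
        exact ⟨hs, fun e => v.2 e.symm⟩
      · exact legalP_of_legalSeq src tgt _ _ _
          (legalSeq_append src tgt l [v.1] _ _ _ hseq ⟨hv, rfl⟩)
  obtain ⟨l, hs, hl, hn⟩ := hall ((∑ v, B v).toNat + 1)
  have := hbd l hs hl
  omega

theorem stab_spec (src tgt : E → V) (hG : StronglyConnected src tgt) (s : V)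
    (ch : {v : V // v ≠ s} → ℕ) :
    SReach src tgt s ch (stab src tgt s ch) ∧ SStable src s (stab src tgt s ch) :=
  Classical.epsilon_spec (exists_stab src tgt hG s ch)

theorem srecurrent_stable (src tgt : E → V) (hG : StronglyConnected src tgt) (s : V)
    (ch : {v : V // v ≠ s} → ℕ) (hch : SRecurrent src tgt s ch) : SStable src s ch := by
  obtain ⟨c2, h⟩ := hch 0
  rw [← h]
  exact (stab_spec src tgt hG s _).2

theorem exists_index [Nonempty V] (src tgt : E → V)
    (hG : StronglyConnected src tgt) (s : V) (r : V → ℕ)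
    (hr : IsPeriodVector src tgt r) (ch : {v : V // v ≠ s} → ℕ)
    (hch : SRecurrent src tgt s ch) :
    ∃ k : ℕ, Recurrent src tgt (extendS s ch + k • deltaS s) := by
  have hlap : lapApply src tgt (fun v => (r v : ℤ)) = 0 := hr.2.2.1
  have hst := srecurrent_stable src tgt hG s ch hch
  obtain ⟨c2, h2⟩ := hch fun v => outdeg src v.1 * (r v.1 + 1)
  have hsr := (stab_spec src tgt hG s ((fun v => outdeg src v.1 * (r v.1 + 1)) + c2)).1
  rw [h2] at hsr
  obtain ⟨m, d', hs, hm, hd'⟩ := legalSeq_of_sreach src tgt s _ _ hsr _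
    (restrict_extend s _ 0)
  set b := extendS s ((fun v => outdeg src v.1 * (r v.1 + 1)) + c2) + 0 • deltaS s with hb
  have hend := legalSeq_end src tgt _ _ _ hm
  have hmP := legalP_of_legalSeq src tgt _ _ _ hm
  have hys : cnt m s = 0 := by simp [cnt, List.count_eq_zero_of_not_mem hs]
  have hd : ∀ v (hv : v ≠ s), d' v = ch ⟨v, hv⟩ := fun v hv => congrFun hd' ⟨v, hv⟩
  have hy : ∀ v, v ≠ s → (r v : ℤ) ≤ cnt m v := by
    intro v hv
    have h1 := hend v
    have h3 : d' v < outdeg src v := by rw [hd v hv]; exact hst ⟨v, hv⟩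
    have h4 : outdeg src v * (r v + 1) ≤ b v := by
      simp [hb, extendS, hv]
    have h5 := lap_mono src tgt 0 (cnt m) (cnt_nonneg m) v
    simp only [lap_zero, Pi.zero_apply, cfg] at h5 h1
    have h3' : (d' v : ℤ) < outdeg src v := by exact_mod_cast h3
    have h4' : (outdeg src v : ℤ) * (r v + 1) ≤ b v := by exact_mod_cast h4
    by_contra hlt
    push Not at hlt
    have h6 : (outdeg src v : ℤ) * cnt m v ≤ outdeg src v * r v :=
      mul_le_mul_of_nonneg_left hlt.le (by positivity)
    have h7 : (outdeg src v : ℤ) * (r v + 1) = outdeg src v * r v + outdeg src v := by ring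
    have h8 : (outdeg src v : ℤ) * (cnt m v - 0) = outdeg src v * cnt m v := by ring
    linarith
  refine ⟨r s * outdeg src s, ?_⟩
  set c := extendS s ch + (r s * outdeg src s) • deltaS s with hcdef
  have hcs : c s = r s * outdeg src s := by simp [hcdef, extendS, deltaS]
  have hcv : ∀ v (hv : v ≠ s), c v = ch ⟨v, hv⟩ := fun v hv => by
    simp [hcdef, extendS, deltaS, hv]
  obtain ⟨l, hl1, hl2⟩ := build (fun v => (r v : ℤ))
    (fun x v => (outdeg src v : ℤ) ≤ cfg src tgt c x v) (by
      intro x hx0 hx hne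
      by_cases hxs : x s < r s
      · refine ⟨s, hxs, ?_⟩
        have h5 := lap_mono src tgt 0 x hx0 s
        simp only [lap_zero, Pi.zero_apply, sub_zero, zero_add] at h5
        simp only [cfg, hcs]
        push_cast
        have h6 : (outdeg src s : ℤ) * (x s + 1) ≤ outdeg src s * r s :=
          mul_le_mul_of_nonneg_left (by omega) (by positivity)
        linarith
      · have hxs' : x s = r s := le_antisymm (hx s) (not_lt.1 hxs)
        have hex : ∃ u, x u < r u := by
          by_contra hcon
          push Not at hcon
          exact hne (le_antisymm hx hcon)
        obtain ⟨u, hu⟩ := hex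
        obtain ⟨v, hv1, hv2⟩ := exchange src tgt b (cnt m + (x - fun v => (r v : ℤ))) (by
          intro w
          by_cases hw : w = s
          · subst hw
            simp [hxs', hys]
          · have h1 := hy w hw
            have h2 := hx0 w
            simp only [Pi.add_apply, Pi.sub_apply, Pi.zero_apply] at *
            omega) m hmP ⟨u, by simp only [Pi.add_apply, Pi.sub_apply]; omega⟩
        have hxv : x v < r v := by
          simp only [Pi.add_apply, Pi.sub_apply] at hv1; omega
        have hvs : v ≠ s := by
          rintro rfl
          exact hxs hxv
        refine ⟨v, hxv, ?_⟩
        rw [← cfg_add src tgt b d' _ hend] at hv2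
        simp only [cfg, lap_sub, hlap, sub_zero] at hv2 ⊢
        rw [hcv v hvs, ← hd v hvs]
        exact hv2) (fun v => by simp)
  exact recurrent_of_closed src tgt r hr c l hl2 hl1


/-- For s-recurrent `ĉ` with `c := φ(ĉ)` there is a legal firing
sequence from `c` back to itself such that (i) every vertex `v` is fired exactly `r(v)`
times, (ii) whenever `s` is fired all other vertices are stable in the current
configuration, and (iii) at some firing of `s` the vertex `s` holds exactly `deg⁺(s)`
chips. -/
theorem refined_legal_sequence [Nonempty V] (src tgt : E → V)
    (hG : StronglyConnected src tgt) (s : V) (r : V → ℕ)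
    (hr : IsPeriodVector src tgt r) (ch : {v : V // v ≠ s} → ℕ)
    (hch : SRecurrent src tgt s ch) :
    ∃ l : List V,
      LegalSeq src tgt l (phi src tgt s ch) (phi src tgt s ch) ∧
      (∀ v : V, l.count v = r v) ∧
      (∀ (i : ℕ) (hi : i < l.length), l.get ⟨i, hi⟩ = s →
        ∀ v : V, v ≠ s → iterFire src tgt (phi src tgt s ch) (l.take i) v < outdeg src v) ∧
      (∃ (i : ℕ) (hi : i < l.length), l.get ⟨i, hi⟩ = s ∧
        iterFire src tgt (phi src tgt s ch) (l.take i) s = outdeg src s) := by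
  have hlap : lapApply src tgt (fun v => (r v : ℤ)) = 0 := hr.2.2.1
  have hst := srecurrent_stable src tgt hG s ch hch
  have hne : {k : ℕ | Recurrent src tgt (extendS s ch + k • deltaS s)}.Nonempty :=
    exists_index src tgt hG s r hr ch hch
  have hrec : Recurrent src tgt (phi src tgt s ch) := Nat.sInf_mem hne
  have hcs : phi src tgt s ch s = sIndex src tgt s ch := by simp [phi, extendS, deltaS]
  have hcv : ∀ v (hv : v ≠ s), phi src tgt s ch v = ch ⟨v, hv⟩ := fun v hv => by
    simp [phi, extendS, deltaS, hv]
  have hmin : ∀ k, Recurrent src tgt (extendS s ch + k • deltaS s) → sIndex src tgt s ch ≤ k :=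
    fun k hk => Nat.sInf_le hk
  set c := phi src tgt s ch with hc
  obtain ⟨l, hl1, hl2⟩ := build (fun v => (r v : ℤ))
    (fun x v => (outdeg src v : ℤ) ≤ cfg src tgt c x v ∧
      (v = s → ∀ w, w ≠ s → cfg src tgt c x w < outdeg src w)) (by
      intro x hx0 hx hne
      by_cases h : ∃ v, v ≠ s ∧ (outdeg src v : ℤ) ≤ cfg src tgt c x v
      · obtain ⟨v, hvs, hv⟩ := h
        refine ⟨v, ?_, hv, fun e => absurd e hvs⟩
        by_contra hcon
        have hxv : x v = r v := le_antisymm (hx v) (not_lt.1 hcon)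
        have h1 := cfg_mono src tgt c _ _ hx v hxv
        have h2 : c v < outdeg src v := by rw [hcv v hvs]; exact hst ⟨v, hvs⟩
        simp only [cfg, hlap, Pi.zero_apply, sub_zero] at h1 hv
        omega
      · push Not at h
        obtain ⟨v, hv1, hv2⟩ := recurrent_step src tgt r hr c hrec x hx0 hx hne
        exact ⟨v, hv1, hv2, fun _ => h⟩) (fun v => by simp)
  have hlP : LegalP src tgt c l := fun p v q h => (hl2 p v q h).1
  have hsplit : ∀ (i : ℕ) (hi : i < l.length),
      l = l.take i ++ l.get ⟨i, hi⟩ :: l.drop (i + 1) := by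
    intro i hi
    simp
  have hit : ∀ p q, l = p ++ q → ∀ v, (iterFire src tgt c p v : ℤ) = cfg src tgt c (cnt p) v :=
    fun p q h v => iterFire_eq src tgt c p (legalP_prefix src tgt c p q (h ▸ hlP)) v
  have hcount : ∀ v, l.count v = r v := fun v => by
    have := congrFun hl1 v
    simp only [cnt] at this
    exact_mod_cast this
  have hclosed : LegalSeq src tgt l c c := by
    have h := legalSeq_of_legalP src tgt l c hlP
    have : iterFire src tgt c l = c := by
      funext v
      have := iterFire_eq src tgt c l hlP v
      rw [hl1] at this
      simp only [cfg, hlap, Pi.zero_apply, sub_zero] at this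
      exact_mod_cast this
    rwa [this] at h
  refine ⟨l, hclosed, hcount, ?_, ?_⟩
  · intro i hi his v hv
    have h1 := (hl2 _ _ _ (hsplit i hi)).2 his v hv
    rw [← hit _ _ (hsplit i hi)] at h1
    exact_mod_cast h1
  · by_contra hcon
    have hgt : ∀ p q, l = p ++ s :: q → (outdeg src s : ℤ) + 1 ≤ cfg src tgt c (cnt p) s := by
      intro p q hpq
      have h1 := hlP p s q hpq
      by_contra hlt
      apply hcon
      refine ⟨p.length, by simp [hpq], by simp [hpq], ?_⟩
      have h2 := hit p _ hpq s
      have h3 : l.take p.length = p := by simp [hpq]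
      rw [h3]
      have : (iterFire src tgt c p s : ℤ) = outdeg src s := by omega
      exact_mod_cast this
    rcases Nat.eq_zero_or_pos (c s) with h0 | hpos
    · have hmem : s ∈ l.reverse := by
        rw [List.mem_reverse, ← List.count_pos_iff, hcount]
        exact hr.1 s
      obtain ⟨q, p, hqp, hsq⟩ := List.eq_append_cons_of_mem hmem
      have hl : l = p.reverse ++ s :: q.reverse := by
        have := congrArg List.reverse hqp
        simpa using this
      have h1 := hgt _ _ hl
      have h2 := legalSeq_end src tgt l c c hclosed s
      have h3 := lap_mono src tgt (cnt p.reverse) (cnt l) (by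
        rw [hl, cnt_append]; exact le_add_of_nonneg_right (cnt_nonneg _)) s
      have h4 : cnt l s - cnt p.reverse s = 1 := by
        have h5 : cnt q.reverse s = 0 := by
          simp [cnt, List.count_eq_zero_of_not_mem hsq]
        rw [hl, cnt_append, cnt_cons, Pi.add_apply, Pi.add_apply, cnt_single, if_pos rfl, h5]
        ring
      rw [h4] at h3
      simp only [cfg, h0] at h1 h2
      push_cast at h1 h2
      linarith
    · have hlP' : LegalP src tgt (extendS s ch + (sIndex src tgt s ch - 1) • deltaS s) l := by
        intro p v q hpq
        by_cases hv : v = s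
        · subst hv
          have h1 := hgt p q hpq
          simp only [cfg, hcs] at h1 ⊢
          have : (extendS v ch + (sIndex src tgt v ch - 1) • deltaS v) v
              = sIndex src tgt v ch - 1 := by simp [extendS, deltaS]
          rw [this]
          omega
        · have h1 := hlP p v q hpq
          simp only [cfg, hcv v hv] at h1 ⊢
          have : (extendS s ch + (sIndex src tgt s ch - 1) • deltaS s) v = ch ⟨v, hv⟩ := by
            simp [extendS, deltaS, hv]
          rw [this]
          exact h1
      have := hmin _ (recurrent_of_closed src tgt r hr _ l hlP' hl1)
      omega

end SandpileBM
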